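/- Let S be a factorizable inverse monoid with zero, with semilattice of idempotents E and group of units G, such that the natural connection θ is a dual isomorphism from E onto a sublattice of L(G). If S is G-nilpotent, then: (i) every idempotent f ∈ E is subcentral in S; (ii) for every idempotent f ∈ E with f ≠ 0 there exists an idempotent e < f such that f is central in e↑; (iii) every 0-minimal idempotent of S is central in S. -/

import Mathlib

/-- An inverse monoid: a monoid in which every element `a` has an inverse `a⁻¹`
satisfying `a * a⁻¹ * a = a` and `a⁻¹ * a * a⁻¹ = a⁻¹`, and this inverse is unique. -/
class InverseMonoid (S : Type*) extends Monoid S, Inv S where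
  mul_inv_mul : ∀ a : S, a * a⁻¹ * a = a
  inv_mul_inv : ∀ a : S, a⁻¹ * a * a⁻¹ = a⁻¹
  inv_unique : ∀ a b : S, a * b * a = a → b * a * b = b → b = a⁻¹

/-- An inverse monoid with a (two-sided absorbing) zero element. -/
class InverseMonoidWithZero (S : Type*) extends InverseMonoid S, Zero S where
  zero_mul : ∀ a : S, 0 * a = 0
  mul_zero : ∀ a : S, a * 0 = 0

/-- The natural partial order on an inverse monoid: `a ≤ b` iff `a = e * b`
for some idempotent `e`. -/
def NatLe {S : Type*} [Monoid S] (a b : S) : Prop :=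
  ∃ e : S, IsIdempotentElem e ∧ a = e * b

/-- The filter `e↑ = {s | e ≤ s}` generated by `e`. -/
def upfilter {S : Type*} [Monoid S] (e : S) : Set S := {s | NatLe e s}

/-- `c` is central in (a subset) `T`: it belongs to `T` and commutes with all elements of `T`. -/
def CentralIn {S : Type*} [Mul S] (T : Set S) (c : S) : Prop :=
  c ∈ T ∧ ∀ s ∈ T, c * s = s * c

/-- A monoid is factorizable if every element is a product of an idempotent and a unit. -/
def Factorizable (S : Type*) [Monoid S] : Prop :=
  ∀ s : S, ∃ e g : S, IsIdempotentElem e ∧ IsUnit g ∧ s = e * g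

/-- The natural connection `θ`: for an (idempotent) `e`, the subgroup
`eθ = {g ∈ G : e * g = e}` of the group of units. -/
def natconn {S : Type*} [Monoid S] (e : S) : Subgroup Sˣ where
  carrier := {g : Sˣ | e * (g : S) = e}
  one_mem' := by simp
  mul_mem' := by
    intro a b ha hb
    simp only [Set.mem_setOf_eq, Units.val_mul] at *
    rw [← mul_assoc, ha, hb]
  inv_mem' := by
    intro a ha
    simp only [Set.mem_setOf_eq] at *
    nth_rewrite 1 [← ha]
    rw [mul_assoc, ← Units.val_mul, mul_inv_cancel, Units.val_one, mul_one]

/-- The natural connection is a dual isomorphism from the idempotents onto a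
sublattice of the lattice of subgroups of the group of units: it is injective on
idempotents, order-reversing in both directions, and its image is closed under
joins and meets of subgroups. -/
def NatconnDualIso (S : Type*) [Monoid S] : Prop :=
  (∀ e f : S, IsIdempotentElem e → IsIdempotentElem f → natconn e = natconn f → e = f) ∧
  (∀ e f : S, IsIdempotentElem e → IsIdempotentElem f →
    (NatLe e f ↔ natconn f ≤ natconn e)) ∧
  (∀ e f : S, IsIdempotentElem e → IsIdempotentElem f →
    (∃ h : S, IsIdempotentElem h ∧ natconn h = natconn e ⊔ natconn f) ∧
    (∃ h : S, IsIdempotentElem h ∧ natconn h = natconn e ⊓ natconn f))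

/-- `j` is the join (least upper bound) of `e` and `f` with respect to the natural order. -/
def IsNatJoin {S : Type*} [Monoid S] (e f j : S) : Prop :=
  NatLe e j ∧ NatLe f j ∧ ∀ x : S, NatLe e x → NatLe f x → NatLe j x

/-- `F_{e,f} = f · e↑`. -/
def Fef {S : Type*} [Monoid S] (e f : S) : Set S := (f * ·) '' upfilter e

/-- `UF_{e,f}`: the group of units of the monoid `F_{e,f}` (whose identity is `f`). -/
def UFef {S : Type*} [Monoid S] (e f : S) : Set S :=
  {x ∈ Fef e f | ∃ y ∈ Fef e f, x * y = f ∧ y * x = f}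

/-- The centre of a subset `T`. -/
def ZIn {S : Type*} [Mul S] (T : Set S) : Set S := {x ∈ T | ∀ y ∈ T, x * y = y * x}

/-- Two subsets are isomorphic as semigroups (with the induced multiplication). -/
def SubIso {S : Type*} [Mul S] (A B : Set S) : Prop :=
  ∃ φ : S → S, Set.BijOn φ A B ∧ ∀ a ∈ A, ∀ b ∈ A, φ (a * b) = φ a * φ b

/-- A subcentral idempotent series between `0` and `a`. -/
def IsSubcentralSeriesBetween {S : Type*} [Monoid S] [Zero S] (n : ℕ) (c : ℕ → S) (a : S) :
    Prop :=
  c 0 = 0 ∧ c n = a ∧ (∀ i ≤ n, IsIdempotentElem (c i)) ∧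
    ∀ i < n, CentralIn (upfilter (c i)) (c (i + 1))

/-- A subcentral idempotent series of `S` (between `0` and `1`). -/
def IsSubcentralSeries {S : Type*} [Monoid S] [Zero S] (n : ℕ) (c : ℕ → S) : Prop :=
  IsSubcentralSeriesBetween n c 1

/-- A central idempotent series of `S`. -/
def IsCentralSeries {S : Type*} [Monoid S] [Zero S] (n : ℕ) (c : ℕ → S) : Prop :=
  c 0 = 0 ∧ c n = 1 ∧ (∀ i ≤ n, IsIdempotentElem (c i)) ∧
    (∀ i < n, NatLe (c i) (c (i + 1))) ∧
    ∀ i < n, CentralIn Set.univ (c (i + 1))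

/-- A subcentral idempotent: one occurring in some subcentral idempotent series of `S`. -/
def IsSubcentralIdem {S : Type*} [Monoid S] [Zero S] (e : S) : Prop :=
  ∃ (n : ℕ) (c : ℕ → S), IsSubcentralSeries n c ∧ ∃ i ≤ n, c i = e

/-- A `G`-nilpotent series: a chain of central idempotents from `0` to `1` with
`F_{eᵢ,eᵢ₊₁} ⊆ Z(F_{0,eᵢ₊₁})`. -/
def GNilpotentSeries {S : Type*} [Monoid S] [Zero S] (n : ℕ) (c : ℕ → S) : Prop :=
  c 0 = 0 ∧ c n = 1 ∧ (∀ i ≤ n, IsIdempotentElem (c i) ∧ CentralIn Set.univ (c i)) ∧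
    (∀ i < n, NatLe (c i) (c (i + 1))) ∧
    ∀ i < n, Fef (c i) (c (i + 1)) ⊆ ZIn (Fef 0 (c (i + 1)))

/-- A `G`-solvable series: a chain of central idempotents from `0` to `1` with
each `F_{eᵢ,eᵢ₊₁}` commutative. -/
def GSolvableSeries {S : Type*} [Monoid S] [Zero S] (n : ℕ) (c : ℕ → S) : Prop :=
  c 0 = 0 ∧ c n = 1 ∧ (∀ i ≤ n, IsIdempotentElem (c i) ∧ CentralIn Set.univ (c i)) ∧
    (∀ i < n, NatLe (c i) (c (i + 1))) ∧
    ∀ i < n, ∀ x ∈ Fef (c i) (c (i + 1)), ∀ y ∈ Fef (c i) (c (i + 1)), x * y = y * x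

/-- `S` is `G`-nilpotent. -/
def GNilpotent (S : Type*) [Monoid S] [Zero S] : Prop :=
  ∃ (n : ℕ) (c : ℕ → S), GNilpotentSeries n c

/-- `S` is `G`-solvable. -/
def GSolvable (S : Type*) [Monoid S] [Zero S] : Prop :=
  ∃ (n : ℕ) (c : ℕ → S), GSolvableSeries n c

/-- Two idempotent series are isomorphic: same length, and a one-to-one correspondence
between their factors under which corresponding factors are isomorphic. -/
def SeriesIso {S : Type*} [Monoid S] (n : ℕ) (c : ℕ → S) (n' : ℕ) (d : ℕ → S) : Prop :=
  n = n' ∧ ∃ σ : ℕ → ℕ, Set.BijOn σ {i | i < n} {i | i < n'} ∧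
    ∀ i < n, SubIso (Fef (c i) (c (i + 1))) (Fef (d (σ i)) (d (σ i + 1)))

/-- A composition series (for a kind `P` of series): it has no repeated terms, and any
refinement of it (of the same kind) only repeats its terms. -/
def IsCompositionOf {S : Type*} (P : ℕ → (ℕ → S) → Prop) (n : ℕ) (c : ℕ → S) : Prop :=
  P n c ∧ (∀ i ≤ n, ∀ j ≤ n, c i = c j → i = j) ∧
    ∀ (m : ℕ) (d : ℕ → S), P m d → (∀ i ≤ n, ∃ j ≤ m, d j = c i) →
      ∀ j ≤ m, ∃ i ≤ n, d j = c i

/-!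
A unit `g` normalizing `fθ` fixes `f` under conjugation, because `θ` is injective and
`(g f g⁻¹)θ` is the conjugate of `fθ` by `g`. By factorizability, the elements of `e↑` are products
of idempotents and units in `eθ`, so `f ≥ e` is central in `e↑` as soon as `eθ` normalizes `fθ`.

Now let `e₀ ≤ ⋯ ≤ eₙ` be a `G`-nilpotent series. The condition on `F_{eᵢ,eᵢ₊₁}` gives
`[eᵢθ, G] ≤ eᵢ₊₁θ`, hence `fθ ∨ eᵢθ` normalizes `fθ ∨ eᵢ₊₁θ`: this is the group-theoretic argument
that every subgroup of a nilpotent group is subnormal. Since `θ` turns products into joins, these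
are the subgroups of `f eᵢ` and `f eᵢ₊₁`, so the products `f eᵢ` form a subcentral series between
`0` and `f`.
-/

namespace InverseMonoid

variable {S : Type*} [InverseMonoid S] {e f : S}

theorem inv_inv (a : S) : a⁻¹⁻¹ = a :=
  (inv_unique a⁻¹ a (inv_mul_inv a) (mul_inv_mul a)).symm

theorem inv_eq_self_of_isIdempotentElem (he : IsIdempotentElem e) : e⁻¹ = e :=
  (inv_unique e e (by rw [he.eq, he.eq]) (by rw [he.eq, he.eq])).symm

theorem isIdempotentElem_inv_mul (he : IsIdempotentElem e) (hf : IsIdempotentElem f) :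
    IsIdempotentElem (e * f)⁻¹ := by
  set x := (e * f)⁻¹
  have hx : f * x * e = x := by
    apply inv_unique
    · calc e * f * (f * x * e) * (e * f) = e * (f * f) * x * (e * e) * f := by
            simp only [mul_assoc]
        _ = e * f * x * (e * f) := by rw [he.eq, hf.eq, mul_assoc _ e f]
        _ = e * f := mul_inv_mul (e * f)
    · calc f * x * e * (e * f) * (f * x * e) = f * x * (e * e) * (f * f) * x * e := by
            simp only [mul_assoc]
        _ = f * (x * (e * f) * x) * e := by rw [he.eq, hf.eq]; simp only [mul_assoc]
        _ = f * x * e := by rw [inv_mul_inv (e * f)]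
  calc x * x = f * x * e * (f * x * e) := by rw [hx]
    _ = f * (x * (e * f) * x) * e := by simp only [mul_assoc]
    _ = x := by rw [inv_mul_inv (e * f), hx]

theorem isIdempotentElem_mul (he : IsIdempotentElem e) (hf : IsIdempotentElem f) :
    IsIdempotentElem (e * f) := by
  have hinv := isIdempotentElem_inv_mul he hf
  rwa [← inv_eq_self_of_isIdempotentElem hinv, inv_inv] at hinv

theorem commute_of_isIdempotentElem (he : IsIdempotentElem e) (hf : IsIdempotentElem f) :
    Commute e f := by
  have mul_swap_mul {a b : S} (ha : IsIdempotentElem a) (hb : IsIdempotentElem b) :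
      a * b * (b * a) * (a * b) = a * b := by
    calc a * b * (b * a) * (a * b) = a * (b * b) * (a * a) * b := by simp only [mul_assoc]
      _ = a * b * (a * b) := by rw [ha.eq, hb.eq, mul_assoc _ a b]
      _ = a * b := (isIdempotentElem_mul ha hb).eq
  calc e * f = (e * f)⁻¹ := (inv_eq_self_of_isIdempotentElem (isIdempotentElem_mul he hf)).symm
    _ = f * e := (inv_unique _ _ (mul_swap_mul he hf) (mul_swap_mul hf he)).symm

end InverseMonoid

theorem sup_le_normalizer_sup_of_commutator_le {G : Type*} [Group G] {N K : Subgroup G}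
    (H : Subgroup G) (h : ⁅N, ⊤⁆ ≤ K) :
    H ⊔ N ≤ Subgroup.normalizer ((H ⊔ K : Subgroup G) : Set G) := by
  refine sup_le (le_sup_left.trans Subgroup.le_normalizer) ?_
  rw [Subgroup.le_normalizer_iff_commutator_le_right]
  exact (Subgroup.commutator_mono le_rfl le_top).trans (h.trans le_sup_right)

section Monoid

variable {S : Type*} [Monoid S] {e f : S}

theorem mem_natconn {g : Sˣ} : g ∈ natconn e ↔ e * (g : S) = e :=
  Iff.rfl

theorem mem_upfilter_of_mem_natconn (he : IsIdempotentElem e) {g : Sˣ} (hg : g ∈ natconn e) :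
    (g : S) ∈ upfilter e :=
  ⟨e, he, hg.symm⟩

theorem natconn_conj (f : S) (g : Sˣ) :
    natconn (g * f * ↑g⁻¹) = (natconn f).map (MulAut.conj g).toMonoidHom := by
  ext x
  rw [Subgroup.mem_map_equiv, MulAut.conj_symm_apply, mem_natconn, mem_natconn]
  rw [← Units.mul_right_inj g⁻¹, ← Units.mul_left_inj g]
  simp [mul_assoc]

theorem commute_of_mem_normalizer_natconn
    (hinj : Set.InjOn natconn {e : S | IsIdempotentElem e}) (hf : IsIdempotentElem f) {g : Sˣ}
    (hg : g ∈ Subgroup.normalizer (natconn f : Set Sˣ)) : Commute f (g : S) := by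
  have hconj_idem : IsIdempotentElem (g * f * ↑g⁻¹ : S) := by
    calc (g * f * ↑g⁻¹ : S) * (g * f * ↑g⁻¹) = g * (f * f) * ↑g⁻¹ := by simp [mul_assoc]
      _ = g * f * ↑g⁻¹ := by rw [hf.eq]
  have hconj : (g * f * ↑g⁻¹ : S) = f :=
    hinj hconj_idem hf <| (natconn_conj f g).trans (Subgroup.mem_normalizer_iff_map_conj_eq.1 hg)
  exact ((Units.mul_inv_eq_iff_eq_mul g).1 hconj).symm

open scoped commutatorElement in
theorem commutator_natconn_le {e' c : S} (he : IsIdempotentElem e) (he' : IsIdempotentElem e')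
    (hc : IsIdempotentElem c) (h : Fef e c ⊆ ZIn (Fef e' c)) :
    ⁅natconn e, natconn e'⁆ ≤ natconn c := by
  have mul_mem_center {x : Sˣ} (hx : x ∈ natconn e) : c * (x : S) ∈ ZIn (Fef e' c) :=
    h ⟨x, mem_upfilter_of_mem_natconn he hx, rfl⟩
  have hc_center : c ∈ ZIn (Fef e' c) := by simpa using mul_mem_center (one_mem _)
  have mul_mul_self {a : S} (ha : c * a ∈ Fef e' c) : c * a * c = c * a := by
    rw [← hc_center.2 _ ha, ← mul_assoc, hc.eq]
  rw [Subgroup.commutator_le]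
  intro x hx y hy
  have hy_mem : c * (y : S) ∈ Fef e' c := ⟨y, mem_upfilter_of_mem_natconn he' hy, rfl⟩
  have hxy : c * (x * y : S) = c * (y * x) := by
    calc c * (x * y : S) = c * x * c * y := by
          rw [mul_mul_self (mul_mem_center hx).1, mul_assoc]
      _ = c * y * c * x := by
          rw [mul_assoc (c * (x : S)), (mul_mem_center hx).2 _ hy_mem, ← mul_assoc]
      _ = c * (y * x) := by rw [mul_mul_self hy_mem, mul_assoc]
  calc c * ((⁅x, y⁆ : Sˣ) : S) = c * (x * y) * ↑x⁻¹ * ↑y⁻¹ := by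
        simp [commutatorElement_def, mul_assoc]
    _ = c := by rw [hxy]; simp [mul_assoc]

end Monoid

section InverseMonoid

variable {S : Type*} [InverseMonoid S] {e f c : S}

open InverseMonoid

theorem NatLe.eq_mul {s : S} (h : NatLe e s) (he : IsIdempotentElem e) : e = e * s := by
  obtain ⟨k, hk, hes⟩ := h
  have hke : k * e = e := by rw [hes, ← mul_assoc, hk.eq]
  calc e = e * (k * s) := by rw [← hes, he.eq]
    _ = e * s := by rw [← mul_assoc, (commute_of_isIdempotentElem he hk).eq, hke]

theorem mem_natconn_of_natLe_mul {a : S} {g : Sˣ} (he : IsIdempotentElem e)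
    (ha : IsIdempotentElem a) (h : NatLe e (a * g)) : g ∈ natconn e := by
  have heag : e = e * a * g := (h.eq_mul he).trans (mul_assoc e a (g : S)).symm
  have hea : e * a = e := by
    calc e * a = e * a * e := by
          rw [mul_assoc, ← (commute_of_isIdempotentElem he ha).eq, ← mul_assoc, he.eq]
      _ = e * a * (e * a * g) := by rw [← heag]
      _ = e := by rw [← mul_assoc, (isIdempotentElem_mul he ha).eq, ← heag]
  rw [hea] at heag
  exact heag.symm

theorem centralIn_upfilter_of_natconn_le_normalizer (hfact : Factorizable S)
    (hinj : Set.InjOn natconn {e : S | IsIdempotentElem e}) (he : IsIdempotentElem e)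
    (hf : IsIdempotentElem f) (hef : NatLe e f)
    (hnorm : natconn e ≤ Subgroup.normalizer (natconn f : Set Sˣ)) :
    CentralIn (upfilter e) f := by
  refine ⟨hef, fun s hs => ?_⟩
  obtain ⟨a, _, ha, ⟨g, rfl⟩, rfl⟩ := hfact s
  have hg : g ∈ natconn e := mem_natconn_of_natLe_mul he ha hs
  exact (commute_of_isIdempotentElem hf ha).mul_right
    (commute_of_mem_normalizer_natconn hinj hf (hnorm hg))

theorem centralIn_upfilter_mul_of_commutator_le (hfact : Factorizable S)
    (hinj : Set.InjOn natconn {e : S | IsIdempotentElem e})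
    (hsup : ∀ e f : S, IsIdempotentElem e → IsIdempotentElem f →
      natconn (e * f) = natconn e ⊔ natconn f)
    (he : IsIdempotentElem e) (hc : IsIdempotentElem c) (hf : IsIdempotentElem f)
    (hec : NatLe e c) (hcomm : ⁅natconn e, ⊤⁆ ≤ natconn c) :
    CentralIn (upfilter (f * e)) (f * c) := by
  have hle : NatLe (f * e) (f * c) :=
    ⟨e, he, by rw [← (commute_of_isIdempotentElem hf he).left_comm, ← hec.eq_mul he]⟩
  apply centralIn_upfilter_of_natconn_le_normalizer hfact hinj (isIdempotentElem_mul hf he)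
    (isIdempotentElem_mul hf hc) hle
  rw [hsup f e hf he, hsup f c hf hc]
  exact sup_le_normalizer_sup_of_commutator_le (natconn f) hcomm

theorem NatconnDualIso.natconn_mul (hθ : NatconnDualIso S) (he : IsIdempotentElem e)
    (hf : IsIdempotentElem f) : natconn (e * f) = natconn e ⊔ natconn f := by
  obtain ⟨-, hanti, hclosed⟩ := hθ
  obtain ⟨j, hj, hjsup⟩ := (hclosed e f he hf).1
  have hef := isIdempotentElem_mul he hf
  apply le_antisymm
  · have hje : NatLe j e := (hanti j e hj he).2 (hjsup ▸ le_sup_left)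
    have hjf : NatLe j f := (hanti j f hj hf).2 (hjsup ▸ le_sup_right)
    have hjef : NatLe j (e * f) :=
      ⟨j, hj, by rw [← mul_assoc, ← hje.eq_mul hj, ← hjf.eq_mul hj]⟩
    exact hjsup ▸ (hanti j (e * f) hj hef).1 hjef
  · exact sup_le
      ((hanti _ _ hef he).1 ⟨f, hf, commute_of_isIdempotentElem he hf⟩)
      ((hanti _ _ hef hf).1 ⟨e, he, rfl⟩)

end InverseMonoid

section SubcentralSeries

variable {S : Type*} [Monoid S] [Zero S] {n : ℕ} {c : ℕ → S} {f : S}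

theorem IsSubcentralSeriesBetween.isSubcentralIdem (h : IsSubcentralSeriesBetween n c f) :
    IsSubcentralIdem f := by
  obtain ⟨hzero, hlast, hidem, hcentral⟩ := h
  let d : ℕ → S := fun i => if i ≤ n then c i else 1
  have hd {i : ℕ} (hi : i ≤ n) : d i = c i := if_pos hi
  have hd_top : d (n + 1) = 1 := if_neg n.not_succ_le_self
  refine ⟨n + 1, d, ⟨(hd n.zero_le).trans hzero, hd_top, fun i hi => ?_, fun i hi => ?_⟩,
    n, n.le_succ, (hd le_rfl).trans hlast⟩
  · rcases Nat.le_succ_iff.1 hi with hin | rfl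
    · exact (hd hin).symm ▸ hidem i hin
    · exact hd_top.symm ▸ IsIdempotentElem.one
  · rcases Nat.lt_succ_iff_lt_or_eq.1 hi with hin | rfl
    · rw [hd hin.le, hd hin]
      exact hcentral i hin
    · rw [hd le_rfl, hd_top]
      exact ⟨⟨c i, hidem i le_rfl, (mul_one _).symm⟩, fun s _ => (Commute.one_left s).eq⟩

theorem IsSubcentralSeriesBetween.exists_centralIn_upfilter
    (h : IsSubcentralSeriesBetween n c f) (hf : f ≠ 0) :
    ∃ e : S, IsIdempotentElem e ∧ NatLe e f ∧ e ≠ f ∧ CentralIn (upfilter e) f := by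
  obtain ⟨hzero, hlast, hidem, hcentral⟩ := h
  induction n with
  | zero => exact absurd (hlast.symm.trans hzero) hf
  | succ n ih =>
    by_cases hrepeat : c n = f
    · exact ih hrepeat (fun i hi => hidem i (hi.trans n.le_succ))
        fun i hi => hcentral i (hi.trans n.lt_succ_self)
    · have hcn : CentralIn (upfilter (c n)) f := hlast ▸ hcentral n n.lt_succ_self
      exact ⟨c n, hidem n n.le_succ, hcn.1, hrepeat, hcn⟩

end SubcentralSeries

section Zero

variable {S : Type*} [InverseMonoidWithZero S]

theorem isIdempotentElem_zero : IsIdempotentElem (0 : S) :=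
  InverseMonoidWithZero.zero_mul 0

theorem natconn_zero : natconn (0 : S) = ⊤ :=
  eq_top_iff.2 fun g _ => InverseMonoidWithZero.zero_mul (g : S)

theorem upfilter_zero : upfilter (0 : S) = Set.univ :=
  Set.eq_univ_of_forall fun s => ⟨0, isIdempotentElem_zero, (InverseMonoidWithZero.zero_mul s).symm⟩

theorem GNilpotentSeries.isSubcentralSeriesBetween_mul (hfact : Factorizable S)
    (hinj : Set.InjOn natconn {e : S | IsIdempotentElem e})
    (hsup : ∀ e f : S, IsIdempotentElem e → IsIdempotentElem f →
      natconn (e * f) = natconn e ⊔ natconn f)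
    {n : ℕ} {c : ℕ → S} (hc : GNilpotentSeries n c) {f : S} (hf : IsIdempotentElem f) :
    IsSubcentralSeriesBetween n (fun i => f * c i) f := by
  obtain ⟨hzero, hone, hcentral, hle, hF⟩ := hc
  refine ⟨by simp only [hzero, InverseMonoidWithZero.mul_zero],
    by simp only [hone, mul_one],
    fun i hi => InverseMonoid.isIdempotentElem_mul hf (hcentral i hi).1, fun i hi => ?_⟩
  have hci := (hcentral i hi.le).1
  have hci' := (hcentral (i + 1) hi).1
  have hcomm : ⁅natconn (c i), ⊤⁆ ≤ natconn (c (i + 1)) :=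
    natconn_zero (S := S) ▸ commutator_natconn_le hci isIdempotentElem_zero hci' (hF i hi)
  exact centralIn_upfilter_mul_of_commutator_le hfact hinj hsup hci hci' hf (hle i hi) hcomm

theorem stmt_19_general (hfact : Factorizable S)
    (hinj : Set.InjOn natconn {e : S | IsIdempotentElem e})
    (hsup : ∀ e f : S, IsIdempotentElem e → IsIdempotentElem f →
      natconn (e * f) = natconn e ⊔ natconn f)
    (hnil : GNilpotent S) :
    (∀ f : S, IsIdempotentElem f → IsSubcentralIdem f) ∧
    (∀ f : S, IsIdempotentElem f → f ≠ 0 →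
      ∃ e : S, IsIdempotentElem e ∧ NatLe e f ∧ e ≠ f ∧ CentralIn (upfilter e) f) ∧
    (∀ f : S, IsIdempotentElem f → f ≠ 0 →
      (∀ g : S, IsIdempotentElem g → NatLe g f → g = 0 ∨ g = f) →
      CentralIn Set.univ f) := by
  obtain ⟨n, c, hc⟩ := hnil
  have hseries (f : S) (hf : IsIdempotentElem f) :
      IsSubcentralSeriesBetween n (fun i => f * c i) f :=
    hc.isSubcentralSeriesBetween_mul hfact hinj hsup hf
  have hbelow (f : S) (hf : IsIdempotentElem f) (hf0 : f ≠ 0) :=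
    (hseries f hf).exists_centralIn_upfilter hf0
  refine ⟨fun f hf => (hseries f hf).isSubcentralIdem, hbelow, fun f hf hf0 hmin => ?_⟩
  obtain ⟨e, he, hef, hne, hcentral⟩ := hbelow f hf hf0
  obtain rfl : e = 0 := (hmin e he hef).resolve_right hne
  rwa [upfilter_zero] at hcentral

end Zero

/-- STATEMENT 19: If a factorizable inverse monoid with zero, whose natural connection
is a dual isomorphism onto a sublattice of the lattice of subgroups of the group of
units, is `G`-nilpotent, then: (i) every idempotent is subcentral; (ii) every nonzero
idempotent `f` admits an idempotent `e < f` with `f` central in `e↑`; (iii) every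
`0`-minimal idempotent is central in `S`. -/
theorem stmt_19 {S : Type*} [InverseMonoidWithZero S] (hfact : Factorizable S)
    (hθ : NatconnDualIso S) (hnil : GNilpotent S) :
    (∀ f : S, IsIdempotentElem f → IsSubcentralIdem f) ∧
    (∀ f : S, IsIdempotentElem f → f ≠ 0 →
      ∃ e : S, IsIdempotentElem e ∧ NatLe e f ∧ e ≠ f ∧ CentralIn (upfilter e) f) ∧
    (∀ f : S, IsIdempotentElem f → f ≠ 0 →
      (∀ g : S, IsIdempotentElem g → NatLe g f → g = 0 ∨ g = f) →
      CentralIn Set.univ f) :=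
  stmt_19_general hfact (fun e he f hf => hθ.1 e f he hf)
    (fun _ _ he hf => hθ.natconn_mul he hf) hnil
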